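/- arXiv:1804.00367 — 4 statements merged into one kernel-verified Lean document; each statement's English description precedes it below -/
import Mathlib

section
/- Let (G,+) be a finite abelian group, E a field of characteristic 0 or of characteristic p not dividing |G| containing a primitive N-th root of unity, N = exp(G), and f : G → E a nonzero function with support S = supp(f). If x_1, …, x_t is a sequence of elements of G such that for each i = 2, …, t the translate x_i + S is not contained in (x_1 + S) ∪ … ∪ (x_{i−1} + S), then |supp(f̂)| ≥ t, where f̂ is the Fourier transform of f. -/
open Function Set

/-- The Fourier transform of `f : G → E`, `f̂(χ) = ∑_{x ∈ G} f(x) χ(-x)`. -/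
def fourierTransform {G E : Type*} [AddCommGroup G] [Fintype G] [Field E]
    (f : G → E) (χ : AddChar G E) : E :=
  ∑ x, f x * χ (-x)

/-!
Each translate of `f` is nonzero at some point where all the previous ones vanish, so the translates
are linearly independent. There are `|G|` characters and they are linearly independent, hence they
span `G → E` and the Fourier transform is injective. Translating `f` multiplies `f̂` by a nowhere
vanishing function, so the transforms of the translates are `t` linearly independent functions
supported in `supp f̂`.
-/

open scoped translate

section LinearIndependent

theorem linearIndependent_of_not_support_subset_iUnion {ι κ R M : Type*} [LinearOrder ι] [Ring R]
    [IsDomain R] [AddCommGroup M] [Module R M] [Module.IsTorsionFree R M] {v : ι → κ → M}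
    (hv : ∀ i, ¬ support (v i) ⊆ ⋃ j < i, support (v j)) :
    LinearIndependent R v := by
  rw [linearIndependent_iff]
  intro c hc
  by_contra hne
  have hsupp : c.support.Nonempty := Finsupp.support_nonempty_iff.mpr hne
  set i := c.support.max' hsupp
  have hi : i ∈ c.support := c.support.max'_mem hsupp
  obtain ⟨y, hy, hy_lt⟩ := not_subset.mp (hv i)
  simp only [mem_iUnion, mem_support, not_exists, not_not] at hy_lt
  have hsum : ∑ j ∈ c.support, c j • v j y = c i • v i y :=
    Finset.sum_eq_single_of_mem i hi fun j hj hji ↦ by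
      rw [hy_lt j ((c.support.le_max' j hj).lt_of_ne hji), smul_zero]
  have hzero : ∑ j ∈ c.support, c j • v j y = 0 := by
    simpa [Finsupp.linearCombination_apply, Finsupp.sum] using congrFun hc y
  exact smul_ne_zero (Finsupp.mem_support_iff.mp hi) hy (hsum.symm.trans hzero)

theorem card_le_ncard_of_linearIndependent_of_support_subset {ι κ R : Type*} [Fintype ι] [Finite κ]
    [Ring R] [StrongRankCondition R] {v : ι → κ → R} (hv : LinearIndependent R v) {S : Set κ}
    (hS : ∀ i, support (v i) ⊆ S) :
    Fintype.card ι ≤ S.ncard := by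
  have hspan : Submodule.span R (range v) ≤ Pi.spanSubset R S :=
    Submodule.span_le.mpr <| range_subset_iff.mpr fun i ↦
      Pi.mem_spanSubset_iff.mpr fun _ ↦ notMem_support.mp ∘ mt (@hS i _)
  have := nontrivial_of_invariantBasisNumber R
  have : Module.Finite R (Pi.spanSubset R S) := .span_of_finite R (toFinite _)
  calc Fintype.card ι = Module.finrank R (Submodule.span R (range v)) :=
        (finrank_span_eq_card hv).symm
    _ ≤ Module.finrank R (Pi.spanSubset R S) := Submodule.finrank_mono hspan
    _ = S.ncard := Pi.dim_spanSubset

end LinearIndependent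

section AddChar

theorem linearIndependent_addChar (A R : Type*) [AddMonoid A] [CommRing R] [IsDomain R] :
    LinearIndependent R ((⇑) : AddChar A R → A → R) :=
  (linearIndependent_monoidHom (Multiplicative A) R).comp _ AddChar.toMonoidHomEquiv.injective

theorem finite_addChar (A R : Type*) [AddMonoid A] [Finite A] [CommRing R] [IsDomain R] :
    Finite (AddChar A R) :=
  (linearIndependent_addChar A R).finite

/-- Characters of an additive group with values in a monoid, as homomorphisms into its units. -/
def addCharEquivHomUnits (A M : Type*) [AddGroup A] [CommMonoid M] :
    AddChar A M ≃ (Multiplicative A →* Mˣ) where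
  toFun χ := χ.toMonoidHom.toHomUnits
  invFun φ := AddChar.toMonoidHomEquiv.symm ((Units.coeHom M).comp φ)
  left_inv _ := rfl
  right_inv _ := by ext; rfl

theorem natCard_addChar (A M : Type*) [AddCommGroup A] [Finite A] [CommMonoid M]
    [HasEnoughRootsOfUnity M (AddMonoid.exponent A)] :
    Nat.card (AddChar A M) = Nat.card A := by
  have : HasEnoughRootsOfUnity M (Monoid.exponent (Multiplicative A)) := by
    rwa [Monoid.exponent_multiplicative]
  calc Nat.card (AddChar A M) = Nat.card (Multiplicative A →* Mˣ) :=
        Nat.card_congr (addCharEquivHomUnits A M)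
    _ = Nat.card A := CommGroup.card_monoidHom_of_hasEnoughRootsOfUnity (Multiplicative A) M

theorem span_range_addChar_eq_top (A K : Type*) [AddCommGroup A] [Finite A] [Field K]
    [HasEnoughRootsOfUnity K (AddMonoid.exponent A)] :
    Submodule.span K (range ((⇑) : AddChar A K → A → K)) = ⊤ := by
  have := Fintype.ofFinite A
  have := finite_addChar A K
  have := Fintype.ofFinite (AddChar A K)
  refine (linearIndependent_addChar A K).span_eq_top_of_card_eq_finrank' ?_
  rw [Module.finrank_fintype_fun_eq_card, Fintype.card_eq_nat_card, Fintype.card_eq_nat_card,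
    natCard_addChar]

end AddChar

section FourierTransform

variable {G E : Type*} [AddCommGroup G] [Fintype G] [Field E]

variable (G E) in
/-- The Fourier transform as a linear map. -/
def fourierTransformLinearMap : (G → E) →ₗ[E] AddChar G E → E where
  toFun := fourierTransform
  map_add' f g := by
    ext χ
    simp only [fourierTransform, Pi.add_apply, add_mul, Finset.sum_add_distrib]
  map_smul' c f := by
    ext χ
    simp only [fourierTransform, Pi.smul_apply, smul_eq_mul, mul_assoc, Finset.mul_sum,
      RingHom.id_apply]

theorem fourierTransform_translate (a : G) (f : G → E) (χ : AddChar G E) :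
    fourierTransform (τ a f) χ = χ (-a) * fourierTransform f χ := by
  rw [fourierTransform, fourierTransform, Finset.mul_sum]
  refine Fintype.sum_equiv (Equiv.subRight a) _ _ fun x ↦ ?_
  rw [Equiv.subRight_apply, translate_apply, mul_left_comm, ← AddChar.map_add_eq_mul,
    neg_sub, neg_add_eq_sub, sub_sub_cancel_left]

theorem support_fourierTransform_translate (a : G) (f : G → E) :
    support (fourierTransform (τ a f)) = support (fourierTransform f) := by
  ext χ
  rw [mem_support, mem_support, fourierTransform_translate,
    mul_ne_zero_iff_left (χ.val_isUnit (-a)).ne_zero]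

variable (G E) in
theorem ker_fourierTransformLinearMap [HasEnoughRootsOfUnity E (AddMonoid.exponent G)] :
    (fourierTransformLinearMap G E).ker = ⊥ := by
  classical
  refine LinearMap.ker_eq_bot'.mpr fun f hf ↦ ?_
  have hpairing : Fintype.linearCombination E f = 0 :=
    LinearMap.ext_on_range (span_range_addChar_eq_top G E) fun χ ↦ by
      simpa [fourierTransformLinearMap, fourierTransform, Fintype.linearCombination_apply,
        mul_comm] using congrFun hf χ⁻¹
  ext x
  simpa using LinearMap.congr_fun hpairing (Pi.single x 1)

theorem card_le_ncard_support_fourierTransform_of_linearIndependent_translate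
    [HasEnoughRootsOfUnity E (AddMonoid.exponent G)] {ι : Type*} [Fintype ι] {f : G → E} {x : ι → G}
    (hx : LinearIndependent E fun i ↦ τ (x i) f) :
    Fintype.card ι ≤ (support (fourierTransform f)).ncard := by
  have := finite_addChar G E
  exact card_le_ncard_of_linearIndependent_of_support_subset
    (hx.map' (fourierTransformLinearMap G E) (ker_fourierTransformLinearMap G E))
    fun i ↦ (support_fourierTransform_translate (x i) f).subset

end FourierTransform

/-- if `x₁, …, x_t` is a sequence in `G` such that each translate
`x_i + supp f` is not contained in the union of the previous translates, then
`|supp f̂| ≥ t`. -/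
theorem stmt_4 {G E : Type*} [AddCommGroup G] [Fintype G] [Field E]
    (hchar : (Fintype.card G : E) ≠ 0)
    (hroot : ∃ ζ : E, IsPrimitiveRoot ζ (AddMonoid.exponent G))
    (f : G → E) (hf : f ≠ 0)
    {t : ℕ} (x : Fin t → G)
    (hseq : ∀ i : Fin t, 0 < i.val →
      ¬ ((fun s => x i + s) '' Function.support f ⊆
          ⋃ j < i, (fun s => x j + s) '' Function.support f)) :
    t ≤ (Function.support (fourierTransform f)).ncard := by
  have : NeZero (AddMonoid.exponent G) := ⟨AddMonoid.exponent_ne_zero_of_finite⟩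
  have : HasEnoughRootsOfUnity E (AddMonoid.exponent G) := ⟨hroot, inferInstance⟩
  have hsupp (i : Fin t) : support (τ (x i) f) = (fun s ↦ x i + s) '' support f :=
    support_translate (x i) f
  have hlin : LinearIndependent E fun i ↦ τ (x i) f := by
    refine linearIndependent_of_not_support_subset_iUnion fun i ↦ ?_
    simp only [hsupp]
    rcases i.val.eq_zero_or_pos with hi | hi
    · have hempty : ⋃ j < i, (fun s ↦ x j + s) '' support f = ∅ := by
        simp [Fin.lt_def, hi]
      rw [hempty, subset_empty_iff, image_eq_empty, support_eq_empty_iff]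
      exact hf
    · exact hseq i hi
  simpa using card_le_ncard_support_fourierTransform_of_linearIndependent_translate hlin
end

section
/- Let (G,+) be a finite abelian group and E a field of characteristic 0 or of characteristic p not dividing |G| containing a primitive N-th root of unity, N = exp(G). Let Ĝ be the group of E-valued characters of G, let K be a subgroup of Ĝ, and let f : G → E be a function whose Fourier transform f̂ is nonzero at some character of K. If |supp(f)| · |supp(f̂) ∩ K| = |K|, then supp(f̂) ∩ K is a coset of a subgroup of K. -/
open Function Set

/-! Let `S` be the support of `f̂` on `K`. The translates of `f̂` under `K` lie in the span of the
evaluations at the points `-x`, `x ∈ supp f`, so they span a space of dimension at most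
`|supp f|`. Any basis of that space consisting of translates of `f̂` has supports `m • S` covering
`K`, and equality in the hypothesis leaves no room for overlaps, so these supports are pairwise
disjoint. Two translates with different supports are linearly independent, hence extend to such a
basis: the translates of `S` are pairwise equal or disjoint, which makes `S` a coset of its
stabilizer. -/

open scoped Pointwise

lemma pairwiseDisjoint_of_sum_ncard_le_ncard_biUnion {ι α : Type*} {t : Set ι} (ht : t.Finite)
    {s : ι → Set α} (hs : ∀ i ∈ t, (s i).Finite)
    (h : ∑ i ∈ ht.toFinset, (s i).ncard ≤ (⋃ i ∈ t, s i).ncard) : t.PairwiseDisjoint s := by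
  classical
  lift t to Finset ι using ht
  simp only [Finset.mem_coe, Finset.finite_toSet_toFinset] at hs h
  intro i hi j hj hij
  set U := ⋃ k ∈ t.erase i, s k with hU
  have hUfin : U.Finite := (t.erase i).finite_toSet.biUnion fun k hk =>
    hs k (Finset.mem_of_mem_erase hk)
  have hsplit : ⋃ k ∈ t, s k = s i ∪ U := by
    rw [hU, ← Finset.set_biUnion_insert, Finset.insert_erase hi]
  have hcount := ncard_union_add_ncard_inter (s i) U (hs i hi) hUfin
  have hUle : U.ncard ≤ ∑ k ∈ t.erase i, (s k).ncard := Finset.set_ncard_biUnion_le _ _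
  have hinter : (s i ∩ U).ncard = 0 := by
    rw [hsplit, ← Finset.add_sum_erase t _ hi] at h
    omega
  have hdisj : Disjoint (s i) U :=
    disjoint_iff_inter_eq_empty.2 <| (ncard_eq_zero ((hs i hi).inter_of_left U)).1 hinter
  exact hdisj.mono_right <|
    subset_biUnion_of_mem (u := s) (Finset.mem_erase.2 ⟨hij.symm, hj⟩)

section Translates

variable {M X E : Type*} [Group M] [MulAction M X]

/-- The translate `x ↦ g (m⁻¹ • x)` of a function along a group action. The inverse makes the
support of the translate by `m` equal to `m • support g`. -/
def smulTranslate (g : X → E) (m : M) : X → E := fun x => g (m⁻¹ • x)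

lemma support_smulTranslate [Zero E] (g : X → E) (m : M) :
    support (smulTranslate g m) = m • support g :=
  support_comp_inv_smul m g

variable [DivisionRing E]

lemma linearIndepOn_smulTranslate_pair {g : X → E} {a b : M}
    (h : a • support g ≠ b • support g) : LinearIndepOn E (smulTranslate g) {a, b} := by
  have hab : a ≠ b := fun hab => h (by rw [hab])
  simp only [← support_smulTranslate] at h
  have hg : g ≠ 0 := by
    rintro rfl
    exact h rfl
  have translate_ne_zero (m : M) : smulTranslate g m ≠ 0 := by
    rwa [← support_nonempty_iff, support_smulTranslate, smul_set_nonempty, support_nonempty_iff]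
  refine (linearIndepOn_pair_iff _ hab (translate_ne_zero a)).2 fun c hc => h ?_
  have hc0 : c ≠ 0 := by
    rintro rfl
    exact translate_ne_zero b (by rw [← hc, zero_smul])
  rw [← hc, support_const_smul_of_ne_zero c _ hc0]

lemma biUnion_smul_support_eq_univ [MulAction.IsPretransitive M X] {g : X → E} (hg : g ≠ 0)
    {b : Set M} (hb : range (smulTranslate (M := M) g) ⊆ Submodule.span E (smulTranslate g '' b)) :
    ⋃ m ∈ b, m • support g = univ := by
  refine eq_univ_of_forall fun x => ?_
  by_contra hx
  have vanish_of_mem (m : M) (hm : m ∈ b) : smulTranslate g m x = 0 := by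
    by_contra hmx
    exact hx (mem_biUnion hm (support_smulTranslate g m ▸ hmx))
  have span_le_ker : Submodule.span E (smulTranslate g '' b) ≤
      LinearMap.ker (LinearMap.proj (R := E) (φ := fun _ : X => E) x) := by
    rw [Submodule.span_le]
    rintro _ ⟨m, hm, rfl⟩
    exact vanish_of_mem m hm
  obtain ⟨y, hy⟩ := ne_iff.1 hg
  obtain ⟨m, rfl⟩ := MulAction.exists_smul_eq M y x
  exact hy (by simpa [smulTranslate] using span_le_ker (hb (mem_range_self m)))

lemma exists_smul_support_cover_of_linearIndepOn [Finite X] [MulAction.IsPretransitive M X]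
    {g : X → E} (hg : g ≠ 0) {t : Set M} (ht : LinearIndepOn E (smulTranslate g) t) :
    ∃ b : Set M, b.Finite ∧ t ⊆ b ∧ ⋃ m ∈ b, m • support g = univ ∧
      b.ncard ≤ Set.finrank E (range (smulTranslate (M := M) g)) := by
  obtain ⟨b, -, htb, hspan, hindep⟩ := exists_linearIndepOn_extension ht (subset_univ t)
  rw [image_univ] at hspan
  have hbfin : b.Finite := LinearIndependent.finite hindep
  refine ⟨b, hbfin, htb, biUnion_smul_support_eq_univ hg hspan, ?_⟩
  have : Fintype b := hbfin.fintype
  rw [← Nat.card_coe_set_eq, Nat.card_eq_fintype_card, ← finrank_span_eq_card hindep]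
  exact Submodule.finrank_mono (Submodule.span_mono (range_comp_subset_range _ (smulTranslate g)))

theorem isBlock_support_of_finrank_mul_ncard_le [Finite X] [MulAction.IsPretransitive M X]
    (g : X → E)
    (h : Set.finrank E (range (smulTranslate (M := M) g)) * (support g).ncard ≤ Nat.card X) :
    MulAction.IsBlock M (support g) := by
  intro m n hmn
  have hg : g ≠ 0 := by
    rintro rfl
    simp at hmn
  obtain ⟨b, hbfin, hmnb, hcover, hcard⟩ :=
    exists_smul_support_cover_of_linearIndepOn hg (linearIndepOn_smulTranslate_pair hmn)
  have hsum : ∑ k ∈ hbfin.toFinset, (k • support g).ncard ≤ (⋃ k ∈ b, k • support g).ncard :=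
    calc ∑ k ∈ hbfin.toFinset, (k • support g).ncard
        = b.ncard * (support g).ncard := by
          simp [ncard_smul_set, ncard_eq_toFinset_card b hbfin]
      _ ≤ Nat.card X := (Nat.mul_le_mul_right _ hcard).trans h
      _ = (⋃ k ∈ b, k • support g).ncard := by rw [hcover, ncard_univ]
  have hdisj : b.PairwiseDisjoint fun k => k • support g :=
    pairwiseDisjoint_of_sum_ncard_le_ncard_biUnion hbfin (fun _ _ => toFinite _) hsum
  exact hdisj (hmnb (mem_insert m {n})) (hmnb (mem_insert_of_mem m rfl))
    (ne_of_apply_ne (· • support g) hmn)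

end Translates

lemma op_smul_stabilizer_eq_of_isBlock {C : Type*} [Group C] {B : Set C}
    (hB : MulAction.IsBlock C B) {c : C} (hc : c ∈ B) :
    MulOpposite.op c • (MulAction.stabilizer C B : Set C) = B := by
  conv_rhs => rw [← hB.orbit_stabilizer_eq hc]
  ext x
  simp [MulAction.mem_orbit_iff, mem_smul_set, Subgroup.smul_def]

instance finite_addChar_s10 {A R : Type*} [AddMonoid A] [Finite A] [CommRing R] [IsDomain R] :
    Finite (AddChar A R) :=
  have : Finite (Multiplicative A →* R) :=
    (linearIndependent_monoidHom (Multiplicative A) R).finite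
  .of_equiv _ AddChar.toMonoidHomEquiv.symm

section Fourier

variable {G E : Type*} [AddCommGroup G] [Fintype G] [Field E]

lemma fourierTransform_mul (f : G → E) (ψ χ : AddChar G E) :
    fourierTransform f (ψ * χ) = fourierTransform (fun x => f x * ψ (-x)) χ := by
  simp only [fourierTransform, AddChar.mul_apply, mul_assoc]

lemma fourierTransform_mem_span_eval (f : G → E) (K : Set (AddChar G E)) :
    (fun κ : K => fourierTransform f κ) ∈
      Submodule.span E ((fun x (κ : K) => κ.1 (-x)) '' support f) := by
  have expansion : (fun κ : K => fourierTransform f κ) =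
      ∑ x, f x • fun κ : K => κ.1 (-x) := by
    ext κ
    simp [fourierTransform]
  rw [expansion]
  refine Submodule.sum_mem _ fun x _ => ?_
  by_cases hx : f x = 0
  · simp [hx]
  · exact Submodule.smul_mem _ _ (Submodule.subset_span (mem_image_of_mem _ hx))

lemma finrank_smulTranslate_fourierTransform_le (f : G → E) (K : Subgroup (AddChar G E)) :
    Set.finrank E (range (smulTranslate (M := K) fun κ : K => fourierTransform f κ)) ≤
      (support f).ncard := by
  set evals : Set (K → E) := (fun x κ => κ.1 (-x)) '' support f
  have span_le : Submodule.span E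
      (range (smulTranslate (M := K) fun κ : K => fourierTransform f κ)) ≤
        Submodule.span E evals := by
    rw [Submodule.span_le]
    rintro _ ⟨m, rfl⟩
    have htwist := fourierTransform_mem_span_eval (fun x => f x * (m⁻¹).1 (-x)) (K : Set _)
    simp only [← fourierTransform_mul] at htwist
    exact Submodule.span_mono (image_mono (support_mul_subset_left _ _)) htwist
  have : Fintype evals := Fintype.ofFinite _
  have : Module.Finite E (Submodule.span E evals) := Module.Finite.span_of_finite E (toFinite _)
  calc Set.finrank E (range (smulTranslate (M := K) fun κ : K => fourierTransform f κ))
      ≤ Set.finrank E evals := Submodule.finrank_mono span_le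
    _ ≤ evals.ncard := by
      rw [ncard_eq_toFinset_card']
      exact finrank_span_le_card evals
    _ ≤ (support f).ncard := ncard_image_le

theorem stmt_10_general (f : G → E) (K : Subgroup (AddChar G E))
    (heq : (support f).ncard * (support (fourierTransform f) ∩ (K : Set (AddChar G E))).ncard
      = (K : Set (AddChar G E)).ncard) :
    ∃ (L : Subgroup (AddChar G E)) (φ : AddChar G E), L ≤ K ∧ φ ∈ K ∧
      support (fourierTransform f) ∩ (K : Set (AddChar G E))
        = (fun κ => φ * κ) '' (L : Set (AddChar G E)) := by
  set S : Set K := support fun κ : K => fourierTransform f κ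
  have hS : support (fourierTransform f) ∩ (K : Set (AddChar G E)) = (↑) '' S := by
    rw [inter_comm]
    exact (Subtype.image_preimage_coe _ _).symm
  rw [hS, ncard_image_of_injective _ Subtype.val_injective] at heq
  have hK : Nat.card K = (K : Set (AddChar G E)).ncard := Nat.card_coe_set_eq _
  rw [← hK] at heq
  have hblock : MulAction.IsBlock K S := isBlock_support_of_finrank_mul_ncard_le _ <|
    (Nat.mul_le_mul_right _ (finrank_smulTranslate_fourierTransform_le f K)).trans heq.le
  obtain ⟨φ, hφ⟩ : S.Nonempty := by
    by_contra hempty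
    rw [not_nonempty_iff_eq_empty] at hempty
    rw [hempty, ncard_empty, mul_zero] at heq
    exact Nat.card_pos.ne heq
  refine ⟨(MulAction.stabilizer K S).map K.subtype, φ, Subgroup.map_subtype_le _, φ.2, ?_⟩
  have hcoset : φ • (MulAction.stabilizer K S : Set K) = S := by
    rw [← op_smul_eq_smul, op_smul_stabilizer_eq_of_isBlock hblock hφ]
  calc support (fourierTransform f) ∩ (K : Set (AddChar G E))
      = K.subtype '' (φ • (MulAction.stabilizer K S : Set K)) := by rw [hcoset, hS]; rfl
    _ = φ.1 • (K.subtype '' (MulAction.stabilizer K S : Set K)) :=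
      image_smul_comm K.subtype φ _ (map_mul K.subtype φ)

end Fourier

/-- in the generalized Donoho–Stark inequality for a subgroup `K` of the
character group, equality `|supp f|·|supp f̂ ∩ K| = |K|` forces `supp f̂ ∩ K` to be a coset
of a subgroup of `K`. -/
theorem stmt_10 {G E : Type*} [AddCommGroup G] [Fintype G] [Field E]
    (hchar : (Fintype.card G : E) ≠ 0)
    (hroot : ∃ ζ : E, IsPrimitiveRoot ζ (AddMonoid.exponent G))
    (f : G → E) (K : Subgroup (AddChar G E))
    (hne : ∃ χ ∈ K, fourierTransform f χ ≠ 0)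
    (heq : (Function.support f).ncard *
        (Function.support (fourierTransform f) ∩ (K : Set (AddChar G E))).ncard
        = (K : Set (AddChar G E)).ncard) :
    ∃ (L : Subgroup (AddChar G E)) (φ : AddChar G E), L ≤ K ∧ φ ∈ K ∧
      Function.support (fourierTransform f) ∩ (K : Set (AddChar G E))
        = (fun κ => φ * κ) '' (L : Set (AddChar G E)) :=
  stmt_10_general f K heq
end

section
/- Let (G,+) be a finite abelian group and E a field of characteristic 0 or of characteristic p not dividing |G| containing a primitive N-th root of unity, N = exp(G). Then for every nonzero function f : G → E, |supp(f)| · |supp(f̂)| ≥ |G|, where f̂ is the Fourier transform of f. -/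
open Function Set

/-!
Let `d` be the dimension of the space spanned by the translates of `f`, and choose `d` translates
spanning it. A point at which these `d` functions all vanish is a zero of every translate of `f`,
which is impossible as `f ≠ 0`; so the `d` supports, each of size `|supp f|`, cover `G` and
`|G| ≤ |supp f| · d`. On the other hand, by Fourier inversion `f` lies in the span of the characters
in `supp f̂`. Every character is an eigenvector of every translation, so that span contains all
translates of `f`, whence `d ≤ |supp f̂|`.
-/

open Module Submodule
open scoped translate

section SupportOfSpan

variable {ι κ : Type*}

lemma support_subset_iUnion_support_of_mem_span {R : Type*} [Semiring R] {v : κ → ι → R}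
    {g : ι → R} (hg : g ∈ span R (range v)) : support g ⊆ ⋃ i, support (v i) := by
  intro x hx
  by_contra hx_notMem
  have hv : ∀ i, v i x = 0 := by simpa using hx_notMem
  have hspan : span R (range v) ≤ LinearMap.ker (LinearMap.proj x : (ι → R) →ₗ[R] R) :=
    span_le.2 <| range_subset_iff.2 hv
  exact hx (hspan hg)

lemma ncard_iUnion_support_le_mul_finrank_span {K : Type*} [DivisionRing K] [Finite ι]
    {v : κ → ι → K} {n : ℕ} (hv : ∀ i, (support (v i)).ncard ≤ n) :
    (⋃ i, support (v i)).ncard ≤ n * finrank K (span K (range v)) := by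
  obtain ⟨κ', a, -, hspan, hli⟩ := exists_linearIndependent' K v
  have : Finite κ' := hli.finite
  have := Fintype.ofFinite κ'
  have hsub : ⋃ i, support (v i) ⊆ ⋃ j, support (v (a j)) :=
    iUnion_subset fun i ↦ support_subset_iUnion_support_of_mem_span <|
      hspan ▸ subset_span (mem_range_self i)
  calc (⋃ i, support (v i)).ncard
      ≤ (⋃ j, support (v (a j))).ncard := ncard_le_ncard hsub
    _ ≤ ∑ j, (support (v (a j))).ncard := ncard_iUnion_le_of_fintype _
    _ ≤ Fintype.card κ' * n := Finset.sum_le_card_nsmul _ _ _ fun j _ ↦ hv (a j)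
    _ = n * finrank K (span K (range v)) := by
      rw [← hspan, finrank_span_eq_card hli, mul_comm]

end SupportOfSpan

section Translates

variable {G : Type*} [AddCommGroup G]

lemma iUnion_support_translate {M : Type*} [Zero M] {f : G → M} (hf : f ≠ 0) :
    ⋃ a, support (τ a f) = univ := by
  obtain ⟨y, hy⟩ := ne_iff.1 hf
  exact eq_univ_of_forall fun x ↦ mem_iUnion.2 ⟨x - y, by simpa using hy⟩

lemma natCard_le_ncard_support_mul_finrank_span_translate {K : Type*} [DivisionRing K] [Finite G]
    {f : G → K} (hf : f ≠ 0) :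
    Nat.card G ≤ (support f).ncard * finrank K (span K (range fun a ↦ τ a f)) := by
  rw [← ncard_univ, ← iUnion_support_translate hf]
  exact ncard_iUnion_support_le_mul_finrank_span fun a ↦ by rw [support_translate, ncard_vadd_set]

lemma translate_addChar {M : Type*} [CommMonoid M] (a : G) (χ : AddChar G M) :
    τ a (χ : G → M) = χ (-a) • (χ : G → M) := by
  ext x
  simp [sub_eq_neg_add, AddChar.map_add_eq_mul]

lemma translate_mem_span_addChar {R : Type*} [CommSemiring R] {S : Set (AddChar G R)} {f : G → R}
    (hf : f ∈ span R ((⇑) '' S)) (a : G) : τ a f ∈ span R ((⇑) '' S) := by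
  induction hf using span_induction with
  | mem g hg =>
    obtain ⟨χ, hχ, rfl⟩ := hg
    rw [translate_addChar]
    exact smul_mem _ _ (subset_span (mem_image_of_mem _ hχ))
  | zero => exact zero_mem _
  | add g h _ _ hg hh => exact add_mem hg hh
  | smul c g _ hg => exact smul_mem _ c hg

end Translates

section EnoughRootsOfUnity

variable (G : Type*) [AddCommGroup G] [Finite G]

section CommMonoid

variable (M : Type*) [CommMonoid M] [hM : HasEnoughRootsOfUnity M (AddMonoid.exponent G)]

lemma natCard_addChar_of_hasEnoughRootsOfUnity : Nat.card (AddChar G M) = Nat.card G := by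
  rw [← Monoid.exponent_multiplicative] at hM
  calc Nat.card (AddChar G M)
      = Nat.card (Multiplicative G →* Mˣ) := Nat.card_congr <|
        AddChar.toMonoidHomEquiv.trans MonoidHom.toHomUnitsMulEquiv.toEquiv
    _ = Nat.card (Multiplicative G) := CommGroup.card_monoidHom_of_hasEnoughRootsOfUnity _ _
    _ = Nat.card G := Nat.card_congr Multiplicative.toAdd

lemma finite_addChar_of_hasEnoughRootsOfUnity : Finite (AddChar G M) :=
  Nat.finite_of_card_ne_zero <| by
    rw [natCard_addChar_of_hasEnoughRootsOfUnity]
    exact Nat.card_pos.ne'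

variable {G}

lemma exists_addChar_apply_ne_one_of_hasEnoughRootsOfUnity {x : G} (hx : x ≠ 0) :
    ∃ χ : AddChar G M, χ x ≠ 1 := by
  rw [← Monoid.exponent_multiplicative] at hM
  obtain ⟨φ, hφ⟩ := CommGroup.exists_apply_ne_one_of_hasEnoughRootsOfUnity (Multiplicative G) M
    (a := .ofAdd x) (by simpa using hx)
  exact ⟨AddChar.toMonoidHomEquiv.symm ((Units.coeHom M).comp φ), by simpa using! hφ⟩

end CommMonoid

variable {G}

lemma sum_addChar_apply_eq_ite {R : Type*} [CommSemiring R] [IsDomain R]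
    [HasEnoughRootsOfUnity R (AddMonoid.exponent G)] [Fintype (AddChar G R)] [DecidableEq G]
    (x : G) : ∑ χ : AddChar G R, χ x = if x = 0 then (Nat.card G : R) else 0 := by
  classical
  have hdual : (AddChar.doubleDualEmb x : AddChar (AddChar G R) R) = 0 ↔ x = 0 := by
    refine ⟨fun h ↦ ?_, fun h ↦ by rw [h, map_zero]⟩
    by_contra hx
    obtain ⟨χ, hχ⟩ := exists_addChar_apply_ne_one_of_hasEnoughRootsOfUnity R hx
    exact hχ (DFunLike.congr_fun h χ)
  have hsum := AddChar.sum_eq_ite (AddChar.doubleDualEmb x : AddChar (AddChar G R) R)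
  simpa only [AddChar.doubleDualEmb_apply, hdual, ← Nat.card_eq_fintype_card,
    natCard_addChar_of_hasEnoughRootsOfUnity] using hsum

end EnoughRootsOfUnity

section FourierInversion

variable {G E : Type*} [AddCommGroup G] [Fintype G] [Field E]
  [HasEnoughRootsOfUnity E (AddMonoid.exponent G)]

theorem sum_fourierTransform_mul_apply [Fintype (AddChar G E)] (f : G → E) (x : G) :
    ∑ χ, fourierTransform f χ * χ x = Fintype.card G * f x := by
  classical
  calc ∑ χ, fourierTransform f χ * χ x
      = ∑ χ : AddChar G E, ∑ y, f y * χ (x - y) := by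
        simp only [fourierTransform, Finset.sum_mul, mul_assoc, ← AddChar.map_add_eq_mul,
          neg_add_eq_sub]
    _ = ∑ y, f y * ∑ χ : AddChar G E, χ (x - y) := by
        rw [Finset.sum_comm]
        simp only [Finset.mul_sum]
    _ = Fintype.card G * f x := by
        simp [sum_addChar_apply_eq_ite, sub_eq_zero, mul_comm]

lemma mem_span_support_fourierTransform (hG : (Fintype.card G : E) ≠ 0) (f : G → E) :
    f ∈ span E ((⇑) '' support (fourierTransform f)) := by
  have := finite_addChar_of_hasEnoughRootsOfUnity G E
  have := Fintype.ofFinite (AddChar G E)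
  have hexpand : (Fintype.card G : E) • f = ∑ χ, fourierTransform f χ • (χ : G → E) := by
    ext x
    simp [sum_fourierTransform_mul_apply]
  rw [← smul_mem_iff _ hG, hexpand]
  refine sum_mem fun χ _ ↦ ?_
  by_cases hχ : fourierTransform f χ = 0
  · simp [hχ]
  · exact smul_mem _ _ (subset_span (mem_image_of_mem _ hχ))

lemma finrank_span_translate_le_ncard_support_fourierTransform
    (hG : (Fintype.card G : E) ≠ 0) (f : G → E) :
    finrank E (span E (range fun a ↦ τ a f)) ≤ (support (fourierTransform f)).ncard := by
  have := finite_addChar_of_hasEnoughRootsOfUnity G E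
  let characters : Set (G → E) := (⇑) '' support (fourierTransform f)
  have := Fintype.ofFinite characters
  have htranslates : span E (range fun a ↦ τ a f) ≤ span E characters :=
    span_le.2 <| range_subset_iff.2 <|
      translate_mem_span_addChar (mem_span_support_fourierTransform hG f)
  calc finrank E (span E (range fun a ↦ τ a f))
      ≤ finrank E (span E characters) := finrank_mono htranslates
    _ ≤ characters.toFinset.card := finrank_span_le_card _
    _ = characters.ncard := (ncard_eq_toFinset_card' _).symm
    _ ≤ (support (fourierTransform f)).ncard := ncard_image_le

end FourierInversion

/-- the Donoho–Stark uncertainty principle over a field `E` of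
characteristic `0` or `p ∤ |G|` containing a primitive `exp(G)`-th root of unity:
`|supp f|·|supp f̂| ≥ |G|` for every nonzero `f : G → E`. -/
theorem stmt_11 {G E : Type*} [AddCommGroup G] [Fintype G] [Field E]
    (hchar : (Fintype.card G : E) ≠ 0)
    (hroot : ∃ ζ : E, IsPrimitiveRoot ζ (AddMonoid.exponent G))
    (f : G → E) (hf : f ≠ 0) :
    Fintype.card G ≤
      (Function.support f).ncard * (Function.support (fourierTransform f)).ncard := by
  have : NeZero (AddMonoid.exponent G) := ⟨AddMonoid.exponent_ne_zero_of_finite⟩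
  have : HasEnoughRootsOfUnity E (AddMonoid.exponent G) := ⟨hroot, inferInstance⟩
  calc Fintype.card G = Nat.card G := Fintype.card_eq_nat_card
    _ ≤ (support f).ncard * finrank E (span E (range fun a ↦ τ a f)) :=
      natCard_le_ncard_support_mul_finrank_span_translate hf
    _ ≤ (support f).ncard * (support (fourierTransform f)).ncard := by
      gcongr
      exact finrank_span_translate_le_ncard_support_fourierTransform hchar f
end

section
/- Let (G,+) be a finite abelian group, E a field of characteristic 0 or of characteristic p not dividing |G| containing a primitive N-th root of unity, N = exp(G), and f : G → E a function. Let χ be an E-valued character of G, and let a and e be integers with e ≥ 1. If f̂(χ^i) = 0 for all integers i with a ≤ i ≤ a + e − 2, and f̂(χ^{a+e−1}) ≠ 0, where χ^i denotes the i-th power of χ in the character group and f̂ is the Fourier transform of f, then |supp(f)| ≥ e. -/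
open Function Set

/-!
Evaluating a polynomial `p` at finitely many nodes only depends on `p` modulo the monic polynomial
vanishing at these nodes. Hence a weighted sum of powers of `n` nodes that vanishes for the
exponents `0, …, n - 1` vanishes for all exponents. The Fourier transform at `χ ^ (a + j)` is such
a sum, with nodes `χ (-x)` and weights `(χ ^ a) (-x) • f x`, where `x` runs over the support of `f`:
if it vanishes at `|supp f|` consecutive powers of `χ`, it vanishes at all later ones.
-/

section PowerSums

open Finset Polynomial

variable {ι R M : Type*} [CommRing R] [AddCommGroup M] [Module R M]
  {s : Finset ι} {v : ι → R} {w : ι → M}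

theorem sum_eval_smul_eq_zero_of_degree_lt {n : ℕ}
    (hpow : ∀ j < n, ∑ i ∈ s, v i ^ j • w i = 0) {p : R[X]} (hp : p.degree < n) :
    ∑ i ∈ s, p.eval (v i) • w i = 0 := by
  calc ∑ i ∈ s, p.eval (v i) • w i
      = ∑ j ∈ p.support, p.coeff j • ∑ i ∈ s, v i ^ j • w i := by
        simp only [eval_eq_sum, sum_def, sum_smul, smul_sum, mul_smul]
        exact sum_comm
    _ = 0 := sum_eq_zero fun j hj ↦ by
        have hjn : j < n := mod_cast (le_degree_of_mem_supp j hj).trans_lt hp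
        rw [hpow j hjn, smul_zero]

theorem sum_eval_smul_eq_zero_of_forall_lt_card
    (hpow : ∀ j < #s, ∑ i ∈ s, v i ^ j • w i = 0) (p : R[X]) :
    ∑ i ∈ s, p.eval (v i) • w i = 0 := by
  cases subsingleton_or_nontrivial R
  · have := Module.subsingleton R M
    exact Subsingleton.elim _ _
  have hdegree : (p %ₘ Lagrange.nodal s v).degree < #s :=
    (degree_modByMonic_lt p Lagrange.nodal_monic).trans_eq Lagrange.degree_nodal
  calc ∑ i ∈ s, p.eval (v i) • w i
      = ∑ i ∈ s, (p %ₘ Lagrange.nodal s v).eval (v i) • w i := sum_congr rfl fun i hi ↦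
        congrArg (· • w i)
          (eval₂_modByMonic_eq_self_of_root (Lagrange.eval_nodal_at_node hi)).symm
    _ = 0 := sum_eval_smul_eq_zero_of_degree_lt hpow hdegree

theorem sum_pow_smul_eq_zero_of_forall_lt_card
    (hpow : ∀ j < #s, ∑ i ∈ s, v i ^ j • w i = 0) (n : ℕ) :
    ∑ i ∈ s, v i ^ n • w i = 0 := by
  simpa only [eval_pow, eval_X] using sum_eval_smul_eq_zero_of_forall_lt_card hpow (X ^ n)

end PowerSums

section Fourier

variable {G R M : Type*} [AddCommGroup G] [CommRing R] [AddCommGroup M] [Module R M]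

/-- The Fourier transform of a finitely supported function on an arbitrary abelian group, with
values in a module over the ring in which the characters take their values. -/
def finsuppFourierTransform (f : G →₀ M) (χ : AddChar G R) : M :=
  f.sum fun x m ↦ χ (-x) • m

theorem finsuppFourierTransform_equivFunOnFinite_symm {E : Type*} [Fintype G] [Field E]
    (f : G → E) (χ : AddChar G E) :
    finsuppFourierTransform (Finsupp.equivFunOnFinite.symm f) χ = fourierTransform f χ := by
  simp [finsuppFourierTransform, fourierTransform, Finsupp.sum_fintype, mul_comm]

theorem finsuppFourierTransform_zpow_add_natCast (f : G →₀ M) (χ : AddChar G R) (a : ℤ) (n : ℕ) :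
    finsuppFourierTransform f (χ ^ (a + n)) =
      ∑ x ∈ f.support, χ (-x) ^ n • (χ ^ a) (-x) • f x := by
  simp only [finsuppFourierTransform, Finsupp.sum, zpow_add, zpow_natCast, AddChar.mul_apply,
    AddChar.pow_apply, mul_smul, smul_comm (χ _ ^ n)]

theorem finsuppFourierTransform_zpow_eq_zero_of_forall_lt_card
    {f : G →₀ M} {χ : AddChar G R} {a : ℤ}
    (hzero : ∀ j < f.support.card, finsuppFourierTransform f (χ ^ (a + (j : ℤ))) = 0) (n : ℕ) :
    finsuppFourierTransform f (χ ^ (a + (n : ℤ))) = 0 := by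
  simp only [finsuppFourierTransform_zpow_add_natCast] at hzero ⊢
  exact sum_pow_smul_eq_zero_of_forall_lt_card hzero n

theorem stmt_19_general (f : G →₀ M) (χ : AddChar G R) (a e : ℤ)
    (hz : ∀ i : ℤ, a ≤ i → i ≤ a + e - 2 → finsuppFourierTransform f (χ ^ i) = 0)
    (hnz : finsuppFourierTransform f (χ ^ (a + e - 1)) ≠ 0) :
    e ≤ f.support.card := by
  by_contra! hlt
  obtain ⟨n, hn⟩ := Int.eq_ofNat_of_zero_le (show 0 ≤ e - 1 by omega)
  rw [add_sub_assoc, hn] at hnz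
  exact hnz <| finsuppFourierTransform_zpow_eq_zero_of_forall_lt_card
    (fun j hj ↦ hz _ (by omega) (by omega)) n

end Fourier

/-- a BCH-type bound: if `f̂(χ^i) = 0` for `a ≤ i ≤ a + e - 2` and
`f̂(χ^{a+e-1}) ≠ 0`, then `|supp f| ≥ e`. -/
theorem stmt_19 {G E : Type*} [AddCommGroup G] [Fintype G] [Field E]
    (hchar : (Fintype.card G : E) ≠ 0)
    (hroot : ∃ ζ : E, IsPrimitiveRoot ζ (AddMonoid.exponent G))
    (f : G → E) (χ : AddChar G E) (a e : ℤ) (he : 1 ≤ e)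
    (hz : ∀ i : ℤ, a ≤ i → i ≤ a + e - 2 → fourierTransform f (χ ^ i) = 0)
    (hnz : fourierTransform f (χ ^ (a + e - 1)) ≠ 0) :
    e ≤ (Function.support f).ncard := by
  simp only [← finsuppFourierTransform_equivFunOnFinite_symm] at hz hnz
  simpa [← Set.ncard_coe_finset, Finsupp.fun_support_eq] using stmt_19_general _ χ a e hz hnz
end
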